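/- arXiv:2411.08009 — 2 statements merged into one kernel-verified Lean document; each statement's English description precedes it below -/
import Mathlib

section
/- Let L be a simplicial complex with subcomplexes L₁ and L₂ such that L = L₁ ∪ L₂, and set L₀ = L₁ ∩ L₂. Let K be a subcomplex of L and set K_i = L_i ∩ K for i = 0, 1, 2. Then b(L₁, K₁) and b(L₂, K₂) are subcomplexes of b(L, K) with b(L, K) = b(L₁, K₁) ∪ b(L₂, K₂) and b(L₁, K₁) ∩ b(L₂, K₂) = b(L₀, K₀). -/
/-! A face of `b(L, K)` is encoded by a simplex `τ` of `K` (possibly empty) together with a chain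
`c` of simplices of `L ∖ K` above `τ`; the face itself is `{ {v} | v ∈ τ } ∪ c`.

The proof rests on two observations. First, the top of such a chain (the largest member of `c`, or
`τ` if `c` is empty) is a simplex of `L` containing all the others, so as soon as it lies in a
subcomplex `L'` the whole face lies in `b(L', L' ∩ K)` (`exists_top`, `mem_relbary_of_le`); this gives
`b(L, K) = b(L₁, K₁) ∪ b(L₂, K₂)`. Second, the pair `(τ, c)` is determined by the face: `c` consists
of its members outside `K`, and the vertices of `τ` are the `v` such that `{v}` is a member lying in
`K` (`relChain_unique`). Hence a face of both `b(L₁, K₁)` and `b(L₂, K₂)` comes from a single pair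
lying in both `L₁` and `L₂`. -/

open scoped Classical

noncomputable section

/-- A collection of finite subsets of the vertex type `V` (the faces). -/
abbrev SCplx (V : Type) : Type := Set (Finset V)

/-- `L` is an abstract simplicial complex: every face is nonempty, and faces are
closed under passing to nonempty subsets. -/
def IsComplex {V : Type} (L : SCplx V) : Prop :=
  (∀ s ∈ L, s.Nonempty) ∧ ∀ s ∈ L, ∀ t : Finset V, t ⊆ s → t.Nonempty → t ∈ L

/-- The vertex set of a complex. -/
def verts {V : Type} (L : SCplx V) : Set V := {v | ({v} : Finset V) ∈ L}

/-- `e` is an edge of `L`: a face with two elements. -/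
def IsEdge {V : Type} (L : SCplx V) (e : Finset V) : Prop := e ∈ L ∧ e.card = 2

/-- The link of a simplex `σ`. -/
def link {V : Type} (L : SCplx V) (σ : Finset V) : SCplx V :=
  {τ | τ ∈ L ∧ Disjoint τ σ ∧ τ ∪ σ ∈ L}

/-- `L` is flag: every nonempty finite set of vertices which are pairwise joined
by edges of `L` is a face of `L`. -/
def FlagCplx {V : Type} (L : SCplx V) : Prop :=
  ∀ s : Finset V, s.Nonempty → (∀ v ∈ s, ({v} : Finset V) ∈ L) →
    (∀ u ∈ s, ∀ v ∈ s, u ≠ v → ({u, v} : Finset V) ∈ L) → s ∈ L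

/-- Simplicial isomorphism: a bijection of vertex sets carrying simplices to
simplices in both directions. -/
def Isom {V W : Type} (L : SCplx V) (L' : SCplx W) : Prop :=
  ∃ f : V → W, Set.BijOn f (verts L) (verts L') ∧
    (∀ s ∈ L, s.image f ∈ L') ∧ (∀ t ∈ L', ∃ s ∈ L, s.image f = t)

/-- Edge subdivision of `L` along the edge `e`; the new vertex `v_e` is `none`. -/
def subdiv {V : Type} (L : SCplx V) (e : Finset V) : SCplx (Option V) :=
  {σ | ∃ τ ∈ L, ¬ e ⊆ τ ∧ σ = τ.image some} ∪
    {σ | ∃ τ f : Finset V, (τ = ∅ ∨ τ ∈ link L e) ∧ f ⊂ e ∧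
      σ = insert none ((τ ∪ f).image some)}

/-- `IterSub L L'` : `L'` is an iterated edge subdivision of `L`, that is, there is
a chain `L = L₀, L₁, …, L_m` with `L_{i+1} = Sub_{e_i}(L_i)` and `L_m ≅ L'`. -/
inductive IterSub : {V : Type} → SCplx V → {W : Type} → SCplx W → Prop
  | iso {V W : Type} {L : SCplx V} {L' : SCplx W} : Isom L L' → IterSub L L'
  | step {V W : Type} {L : SCplx V} {L' : SCplx W} (e : Finset V) :
      IsEdge L e → IterSub (subdiv L e) L' → IterSub L L'

/-- The relative barycentric subdivision `b(L, K)`: vertices are the simplices of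
`L ∖ K` (barycenters) together with the vertices of `K` (as singleton simplices);
faces are spanned by chains of simplices of `L` with at most one member in `K`. -/
def relbary {V : Type} (L K : SCplx V) : SCplx (Finset V) :=
  {S | S.Nonempty ∧ ∃ (τ : Finset V) (c : Finset (Finset V)),
    (τ = ∅ ∨ τ ∈ K) ∧ (∀ σ ∈ c, σ ∈ L ∧ σ ∉ K) ∧
    (∀ σ ∈ c, ∀ σ' ∈ c, σ ⊆ σ' ∨ σ' ⊆ σ) ∧ (∀ σ ∈ c, τ ⊆ σ) ∧
    S = τ.image (fun v => ({v} : Finset V)) ∪ c}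

/-- The join of two complexes on disjoint vertex sets. -/
def join {V W : Type} (L₁ : SCplx V) (L₂ : SCplx W) : SCplx (V ⊕ W) :=
  {s | ∃ (s₁ : Finset V) (s₂ : Finset W), (s₁ = ∅ ∨ s₁ ∈ L₁) ∧ (s₂ = ∅ ∨ s₂ ∈ L₂) ∧
    (s₁.Nonempty ∨ s₂.Nonempty) ∧ s = s₁.image Sum.inl ∪ s₂.image Sum.inr}

/-- The two-point complex `S⁰` (two vertices, no edge). -/
def S0 : SCplx Bool := {s | s = {true} ∨ s = {false}}

/-- The suspension of `L` : the join of `L` with `S⁰`. -/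
def susp {V : Type} (L : SCplx V) : SCplx (V ⊕ Bool) := join L S0

/-- The cone on `L`, with cone vertex `none`. -/
def cone {V : Type} (L : SCplx V) : SCplx (Option V) :=
  {σ | ∃ τ : Finset V, (τ = ∅ ∨ τ ∈ L) ∧
    ((τ.Nonempty ∧ σ = τ.image some) ∨ σ = insert none (τ.image some))}

/-- The boundary of the `n`-simplex : all nonempty proper subsets of an
`(n+1)`-element vertex set. -/
def bdSimplex (n : ℕ) : SCplx (Fin (n + 1)) :=
  {s | s.Nonempty ∧ s ≠ Finset.univ}

/-- The boundary complex `∂σ` of a simplex `σ` : proper nonempty subsets of `σ`. -/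
def bdry {V : Type} (σ : Finset V) : SCplx V := {t | t ⊂ σ ∧ t.Nonempty}

/-- The boundary of the `n`-octahedron, i.e. the `n`-fold join `S⁰ * ⋯ * S⁰`. -/
def octa (n : ℕ) : SCplx (Fin n × Bool) :=
  {s | s.Nonempty ∧
    ∀ i : Fin n, ¬ (((i, true) : Fin n × Bool) ∈ s ∧ ((i, false) : Fin n × Bool) ∈ s)}

end

/-- `(τ, c)` encodes a (possibly empty) face of `b(L, K)`: `τ` is empty or a simplex of `K`, and
`c` is a chain of simplices of `L ∖ K`, each containing `τ`. -/
def RelChain {V : Type} (L K : SCplx V) (τ : Finset V) (c : Finset (Finset V)) : Prop :=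
  (τ = ∅ ∨ τ ∈ K) ∧ (∀ σ ∈ c, σ ∈ L ∧ σ ∉ K) ∧
    (∀ σ ∈ c, ∀ σ' ∈ c, σ ⊆ σ' ∨ σ' ⊆ σ) ∧ (∀ σ ∈ c, τ ⊆ σ)

lemma mem_relbary_iff {V : Type} {L K : SCplx V} {S : Finset (Finset V)} :
    S ∈ relbary L K ↔ S.Nonempty ∧ ∃ τ c, RelChain L K τ c ∧
      S = τ.image (fun v => ({v} : Finset V)) ∪ c := by
  simp only [relbary, RelChain, Set.mem_ofPred_eq, and_assoc]

lemma RelChain.mono {V : Type} {L L' K : SCplx V} (hL : L' ⊆ L) {τ : Finset V}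
    {c : Finset (Finset V)} (h : RelChain L' (L' ∩ K) τ c) : RelChain L K τ c :=
  ⟨h.1.imp_right And.right, fun σ hσ => ⟨hL (h.2.1 σ hσ).1,
    fun hk => (h.2.1 σ hσ).2 ⟨(h.2.1 σ hσ).1, hk⟩⟩, h.2.2⟩

lemma relbary_subset {V : Type} {L L' K : SCplx V} (h : L' ⊆ L) :
    relbary L' (L' ∩ K) ⊆ relbary L K := by
  intro S hS
  obtain ⟨hne, τ, c, hc, rfl⟩ := mem_relbary_iff.1 hS
  exact mem_relbary_iff.2 ⟨hne, τ, c, hc.mono h, rfl⟩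

lemma isComplex_inter {V : Type} {L K : SCplx V} (hL : IsComplex L) (hK : IsComplex K) :
    IsComplex (L ∩ K) :=
  ⟨fun s hs => hL.1 s hs.1, fun s hs t hts ht => ⟨hL.2 s hs.1 t hts ht, hK.2 s hs.2 t hts ht⟩⟩

lemma isComplex_relbary {V : Type} {L K : SCplx V} (hK : IsComplex K) :
    IsComplex (relbary L K) := by
  refine ⟨fun S hS => hS.1, ?_⟩
  rintro S ⟨-, τ, c, hτ, hc, hchain, hle, rfl⟩ T hT hne
  refine ⟨hne, τ.filter (fun v => {v} ∈ T), c.filter (· ∈ T), ?_, ?_, ?_, ?_, ?_⟩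
  · rcases (τ.filter (fun v => ({v} : Finset V) ∈ T)).eq_empty_or_nonempty with h | h
    · exact Or.inl h
    · rcases hτ with rfl | hτ
      · simp
      · exact Or.inr (hK.2 τ hτ _ (Finset.filter_subset _ _) h)
  · exact fun σ hσ => hc σ (Finset.mem_filter.1 hσ).1
  · exact fun σ hσ σ' hσ' => hchain σ (Finset.mem_filter.1 hσ).1 σ' (Finset.mem_filter.1 hσ').1
  · exact fun σ hσ => (Finset.filter_subset _ _).trans (hle σ (Finset.mem_filter.1 hσ).1)
  · ext σ
    simp only [Finset.mem_union, Finset.mem_image, Finset.mem_filter]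
    constructor
    · intro hσ
      rcases Finset.mem_union.1 (hT hσ) with h | h
      · obtain ⟨v, hv, rfl⟩ := Finset.mem_image.1 h
        exact Or.inl ⟨v, ⟨hv, hσ⟩, rfl⟩
      · exact Or.inr ⟨h, hσ⟩
    · rintro (⟨v, ⟨-, hv⟩, rfl⟩ | ⟨-, h⟩) <;> assumption

/-- A face of `b(L, K)` all of whose simplices lie below a simplex `μ` of a subcomplex `L'` is a
face of `b(L', L' ∩ K)`. -/
lemma mem_relbary_of_le {V : Type} {L L' K : SCplx V} (hL : IsComplex L) (hL' : IsComplex L')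
    {τ : Finset V} {c : Finset (Finset V)} (h : RelChain L K τ c)
    (hS : (τ.image (fun v => ({v} : Finset V)) ∪ c).Nonempty) {μ : Finset V} (hμ : μ ∈ L')
    (hτμ : τ ⊆ μ) (hcμ : ∀ σ ∈ c, σ ⊆ μ) :
    τ.image (fun v => ({v} : Finset V)) ∪ c ∈ relbary L' (L' ∩ K) := by
  obtain ⟨hτ, hc, hchain, hle⟩ := h
  refine ⟨hS, τ, c, ?_, ?_, hchain, hle, rfl⟩
  · rcases τ.eq_empty_or_nonempty with h0 | h0
    · exact Or.inl h0
    · exact hτ.imp_right fun hk => ⟨hL'.2 μ hμ τ hτμ h0, hk⟩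
  · exact fun σ hσ =>
      ⟨hL'.2 μ hμ σ (hcμ σ hσ) (hL.1 σ (hc σ hσ).1), fun hk => (hc σ hσ).2 hk.2⟩

/-- The simplices making up a nonempty face all lie below a single simplex of `L`. -/
lemma exists_top {V : Type} {L K : SCplx V} (hKL : K ⊆ L)
    {τ : Finset V} {c : Finset (Finset V)} (h : RelChain L K τ c)
    (hS : (τ.image (fun v => ({v} : Finset V)) ∪ c).Nonempty) :
    ∃ μ ∈ L, τ ⊆ μ ∧ ∀ σ ∈ c, σ ⊆ μ := by
  obtain ⟨hτ, hc, hchain, hle⟩ := h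
  rcases c.eq_empty_or_nonempty with rfl | hne
  · rcases hτ with rfl | hτ
    · simp at hS
    · exact ⟨τ, hKL hτ, subset_rfl, by simp⟩
  · -- a member of the chain of maximal cardinality contains all the others
    obtain ⟨μ, hμ, hmax⟩ := c.exists_max_image Finset.card hne
    refine ⟨μ, (hc μ hμ).1, hle μ hμ, fun σ hσ => ?_⟩
    rcases hchain σ hσ μ hμ with h | h
    · exact h
    · exact (Finset.eq_of_subset_of_card_le h (hmax σ hσ)).ge

lemma relbary_mem_or_mem {V : Type} {L L₁ L₂ K : SCplx V} (hL : IsComplex L)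
    (hL₁ : IsComplex L₁) (hL₂ : IsComplex L₂) (hunion : L = L₁ ∪ L₂) (hKL : K ⊆ L)
    {S : Finset (Finset V)} (hS : S ∈ relbary L K) :
    S ∈ relbary L₁ (L₁ ∩ K) ∨ S ∈ relbary L₂ (L₂ ∩ K) := by
  obtain ⟨hne, τ, c, h, rfl⟩ := mem_relbary_iff.1 hS
  obtain ⟨μ, hμ, hτμ, hcμ⟩ := exists_top hKL h hne
  rw [hunion] at hμ
  exact hμ.imp (fun hμ => mem_relbary_of_le hL hL₁ h hne hμ hτμ hcμ)
    (fun hμ => mem_relbary_of_le hL hL₂ h hne hμ hτμ hcμ)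

lemma singleton_mem_of_mem {V : Type} {K : SCplx V} (hK : IsComplex K) {τ : Finset V}
    (hτ : τ = ∅ ∨ τ ∈ K) {v : V} (hv : v ∈ τ) : {v} ∈ K := by
  rcases hτ with rfl | hτ
  · simp at hv
  · exact hK.2 τ hτ _ (Finset.singleton_subset_iff.2 hv) (Finset.singleton_nonempty v)

/-- The chain part of a face consists of its members outside `K`. -/
lemma mem_chain_iff {V : Type} {L K : SCplx V} (hK : IsComplex K) {τ : Finset V}
    {c : Finset (Finset V)} (h : RelChain L K τ c) (σ : Finset V) :
    σ ∈ c ↔ σ ∈ τ.image (fun v => ({v} : Finset V)) ∪ c ∧ σ ∉ K := by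
  refine ⟨fun hσ => ⟨Finset.mem_union_right _ hσ, (h.2.1 σ hσ).2⟩, fun ⟨hσ, hk⟩ => ?_⟩
  rcases Finset.mem_union.1 hσ with hσ | hσ
  · obtain ⟨v, hv, rfl⟩ := Finset.mem_image.1 hσ
    exact absurd (singleton_mem_of_mem hK h.1 hv) hk
  · exact hσ

/-- The `K`-part of a face is spanned by its members in `K`, all of which are vertices. -/
lemma mem_base_iff {V : Type} {L K : SCplx V} (hK : IsComplex K) {τ : Finset V}
    {c : Finset (Finset V)} (h : RelChain L K τ c) (v : V) :
    v ∈ τ ↔ {v} ∈ τ.image (fun v => ({v} : Finset V)) ∪ c ∧ {v} ∈ K := by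
  refine ⟨fun hv => ⟨Finset.mem_union_left _ (Finset.mem_image_of_mem _ hv),
    singleton_mem_of_mem hK h.1 hv⟩, fun ⟨hv, hk⟩ => ?_⟩
  rcases Finset.mem_union.1 hv with hv | hv
  · obtain ⟨w, hw, hwv⟩ := Finset.mem_image.1 hv
    exact Finset.singleton_injective hwv ▸ hw
  · exact absurd hk (h.2.1 _ hv).2

lemma relChain_unique {V : Type} {L K : SCplx V} (hK : IsComplex K) {τ τ' : Finset V}
    {c c' : Finset (Finset V)} (h : RelChain L K τ c) (h' : RelChain L K τ' c')
    (heq : τ.image (fun v => ({v} : Finset V)) ∪ c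
      = τ'.image (fun v => ({v} : Finset V)) ∪ c') : τ = τ' ∧ c = c' := by
  constructor
  · ext v
    rw [mem_base_iff hK h, mem_base_iff hK h', heq]
  · ext σ
    rw [mem_chain_iff hK h, mem_chain_iff hK h', heq]

lemma relbary_inter {V : Type} {L L₁ L₂ K : SCplx V} (hL₁L : L₁ ⊆ L) (hL₂L : L₂ ⊆ L)
    (hK : IsComplex K) :
    relbary L₁ (L₁ ∩ K) ∩ relbary L₂ (L₂ ∩ K) = relbary (L₁ ∩ L₂) ((L₁ ∩ L₂) ∩ K) := by
  apply Set.Subset.antisymm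
  · rintro S ⟨h₁, h₂⟩
    obtain ⟨hne, τ, c, h, rfl⟩ := mem_relbary_iff.1 h₁
    obtain ⟨-, τ', c', h', heq⟩ := mem_relbary_iff.1 h₂
    obtain ⟨rfl, rfl⟩ := relChain_unique hK (h.mono hL₁L) (h'.mono hL₂L) heq
    refine mem_relbary_iff.2 ⟨hne, τ, c, ⟨?_, fun σ hσ => ?_, h.2.2⟩, rfl⟩
    · rcases h.1 with h0 | h0
      · exact Or.inl h0
      · exact h'.1.imp_right fun h0' => ⟨⟨h0.1, h0'.1⟩, h0.2⟩
    · exact ⟨⟨(h.2.1 σ hσ).1, (h'.2.1 σ hσ).1⟩, fun hk => (h.2.1 σ hσ).2 ⟨hk.1.1, hk.2⟩⟩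
  · intro S hS
    obtain ⟨hne, τ, c, h, rfl⟩ := mem_relbary_iff.1 hS
    constructor
    · exact mem_relbary_iff.2 ⟨hne, τ, c, ⟨h.1.imp_right fun h0 => ⟨h0.1.1, h0.2⟩,
        fun σ hσ => ⟨(h.2.1 σ hσ).1.1, fun hk => (h.2.1 σ hσ).2 ⟨(h.2.1 σ hσ).1, hk.2⟩⟩,
        h.2.2⟩, rfl⟩
    · exact mem_relbary_iff.2 ⟨hne, τ, c, ⟨h.1.imp_right fun h0 => ⟨h0.1.2, h0.2⟩,
        fun σ hσ => ⟨(h.2.1 σ hσ).1.2, fun hk => (h.2.1 σ hσ).2 ⟨(h.2.1 σ hσ).1, hk.2⟩⟩,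
        h.2.2⟩, rfl⟩

/-- gluing lemma for relative barycentric subdivisions:
if `L = L₁ ∪ L₂` with `L₀ = L₁ ∩ L₂` and `K ⊆ L`, `Kᵢ = Lᵢ ∩ K`, then
`b(L₁, K₁)` and `b(L₂, K₂)` are subcomplexes of `b(L, K)`, with
`b(L, K) = b(L₁, K₁) ∪ b(L₂, K₂)` and `b(L₁, K₁) ∩ b(L₂, K₂) = b(L₀, K₀)`. -/
theorem relbary_union
    {V : Type} [Fintype V] (L L₁ L₂ K : SCplx V)
    (hL : IsComplex L) (hL₁ : IsComplex L₁) (hL₂ : IsComplex L₂)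
    (hL₁L : L₁ ⊆ L) (hL₂L : L₂ ⊆ L) (hunion : L = L₁ ∪ L₂)
    (hK : IsComplex K) (hKL : K ⊆ L) :
    relbary L₁ (L₁ ∩ K) ⊆ relbary L K ∧ IsComplex (relbary L₁ (L₁ ∩ K)) ∧
    relbary L₂ (L₂ ∩ K) ⊆ relbary L K ∧ IsComplex (relbary L₂ (L₂ ∩ K)) ∧
    relbary L K = relbary L₁ (L₁ ∩ K) ∪ relbary L₂ (L₂ ∩ K) ∧
    relbary L₁ (L₁ ∩ K) ∩ relbary L₂ (L₂ ∩ K) = relbary (L₁ ∩ L₂) ((L₁ ∩ L₂) ∩ K) := by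
  refine ⟨relbary_subset hL₁L, isComplex_relbary (isComplex_inter hL₁ hK),
    relbary_subset hL₂L, isComplex_relbary (isComplex_inter hL₂ hK), ?_,
    relbary_inter hL₁L hL₂L hK⟩
  exact Set.Subset.antisymm (fun S hS => relbary_mem_or_mem hL hL₁ hL₂ hunion hKL hS)
    (Set.union_subset (relbary_subset hL₁L) (relbary_subset hL₂L))
end

section
/- If L is a flag simplicial complex and e is an edge of L, then the edge subdivision Sub_e(L) is a flag simplicial complex. -/
/-!
Write `σ'` for the set of old vertices of `σ : Finset (Option V)`. The face description of
`Sub_e(L)` unifies as `mem_subdiv_iff`: `σ` is a face iff `σ'` does not contain `e`, and `σ'`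
(respectively `σ' ∪ e`, when the new vertex lies in `σ`) is a face of `L`. Closure under subsets
is then immediate.

For flagness, let the vertices of `σ` be pairwise joined. The two ends of `e` are not joined in
`Sub_e(L)`, so `σ'` does not contain `e`. Any two vertices of `σ'` are joined in `L`, so
`σ' ∈ L` as `L` is flag. If the new vertex lies in `σ`, each `u ∈ σ'` is joined to it, which says
`{u} ∪ e ∈ L`; hence the vertices of `σ' ∪ e` are pairwise joined in `L`, and `σ' ∪ e ∈ L`.
-/

open scoped Classical

/-- A uniform description of the faces of the edge subdivision: the decomposition `τ ∪ f` of the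
old vertices of a face through the new vertex is recovered as `(σ' \ e) ∪ (σ' ∩ e)`. -/
theorem mem_subdiv_iff {V : Type} {L : SCplx V} {e : Finset V}
    (hL : IsComplex L) (he : IsEdge L e) (σ : Finset (Option V)) :
    σ ∈ subdiv L e ↔ ¬ e ⊆ σ.eraseNone ∧ (none ∉ σ → σ.eraseNone ∈ L) ∧
      (none ∈ σ → σ.eraseNone ∪ e ∈ L) := by
  constructor
  · rintro (⟨τ, hτ, hne, rfl⟩ | ⟨τ, f, hτ, hf, rfl⟩)
    · have h : (τ.image some).eraseNone = τ := by ext x; simp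
      rw [h]
      exact ⟨hne, fun _ => hτ, fun h => by simp at h⟩
    · have h : (insert none ((τ ∪ f).image some)).eraseNone = τ ∪ f := by ext x; simp
      rw [h]
      have hd : Disjoint τ e := by
        rcases hτ with rfl | hτ
        · simp
        · exact hτ.2.1
      refine ⟨fun hs => hf.2 fun x hx => ?_, fun h => by simp at h, fun _ => ?_⟩
      · rcases Finset.mem_union.1 (hs hx) with h | h
        · exact absurd hx (Finset.disjoint_left.1 hd h)
        · exact h
      · rw [Finset.union_assoc, Finset.union_eq_right.2 hf.1]
        rcases hτ with rfl | hτ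
        · simpa using he.1
        · exact hτ.2.2
  · rintro ⟨hne, h0, h1⟩
    by_cases hn : none ∈ σ
    · refine Or.inr ⟨σ.eraseNone \ e, σ.eraseNone ∩ e, ?_, ⟨Finset.inter_subset_right, ?_⟩, ?_⟩
      · rcases Finset.eq_empty_or_nonempty (σ.eraseNone \ e) with h | h
        · exact Or.inl h
        · refine Or.inr ⟨hL.2 _ (h1 hn) _ ?_ h, Finset.sdiff_disjoint, ?_⟩
          · exact Finset.sdiff_subset.trans Finset.subset_union_left
          · rw [Finset.sdiff_union_self_eq_union]
            exact h1 hn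
      · exact fun h => hne (h.trans Finset.inter_subset_left)
      · rw [Finset.sdiff_union_inter]
        ext (_ | x) <;> simp [hn]
    · refine Or.inl ⟨σ.eraseNone, h0 hn, hne, ?_⟩
      ext (_ | x) <;> simp [hn]

theorem isComplex_subdiv {V : Type} {L : SCplx V} {e : Finset V}
    (hL : IsComplex L) (he : IsEdge L e) : IsComplex (subdiv L e) := by
  refine ⟨fun s hs => ?_, fun s hs t hts ht => ?_⟩
  · by_contra h
    rw [Finset.not_nonempty_iff_eq_empty] at h
    subst h
    -- The empty set misses the new vertex, so it would have to be a face of `L`.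
    have := hL.1 _ (((mem_subdiv_iff hL he _).1 hs).2.1 (by simp))
    simp at this
  · obtain ⟨hne, h0, h1⟩ := (mem_subdiv_iff hL he s).1 hs
    have hsub : t.eraseNone ⊆ s.eraseNone := fun x hx => by
      simp only [Finset.mem_eraseNone] at hx ⊢
      exact hts hx
    obtain ⟨x, hx⟩ := hL.1 e he.1
    refine (mem_subdiv_iff hL he t).2 ⟨fun h => hne (h.trans hsub), fun hn => ?_, fun hn => ?_⟩
    · have htn : t.eraseNone.Nonempty := by
        obtain ⟨_ | v, hv⟩ := ht
        · exact absurd hv hn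
        · exact ⟨v, by simpa using hv⟩
      by_cases hs' : none ∈ s
      · exact hL.2 _ (h1 hs') _ (hsub.trans Finset.subset_union_left) htn
      · exact hL.2 _ (h0 hs') _ hsub htn
    · exact hL.2 _ (h1 (hts hn)) _ (Finset.union_subset_union_left hsub)
        ⟨x, Finset.mem_union_right _ hx⟩

theorem flagCplx_subdiv {V : Type} {L : SCplx V} {e : Finset V}
    (hL : IsComplex L) (hflag : FlagCplx L) (he : IsEdge L e) : FlagCplx (subdiv L e) := by
  intro σ hσ hv hp
  have hvert : ∀ u ∈ σ.eraseNone, ({u} : Finset V) ∈ L := by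
    intro u hu
    have h := ((mem_subdiv_iff hL he _).1 (hv _ (Finset.mem_eraseNone.1 hu))).2.1 (by simp)
    have h2 : ({some u} : Finset (Option V)).eraseNone = {u} := by ext x; simp
    rwa [h2] at h
  -- The instance is arbitrary because the pairs in `FlagCplx` and those elaborated over
  -- `Option V` use different decidability instances.
  have hpair {_ : DecidableEq (Option V)} (u v : V) :
      ({some u, some v} : Finset (Option V)).eraseNone = {u, v} := by
    ext x; simp
  have hedge : ∀ u ∈ σ.eraseNone, ∀ v ∈ σ.eraseNone, u ≠ v → ({u, v} : Finset V) ∈ L := by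
    intro u hu v hv' huv
    have h := ((mem_subdiv_iff hL he _).1 (hp _ (Finset.mem_eraseNone.1 hu) _
      (Finset.mem_eraseNone.1 hv') (by simpa using huv))).2.1 (by simp)
    rwa [hpair] at h
  refine (mem_subdiv_iff hL he σ).2 ⟨fun hsub => ?_, fun hn => ?_, fun hn => ?_⟩
  · -- The ends of `e` are not joined in the subdivision.
    obtain ⟨a, b, hab, rfl⟩ := Finset.card_eq_two.1 he.2
    have h := ((mem_subdiv_iff hL he _).1 (hp _ (Finset.mem_eraseNone.1 (hsub (by simp : a ∈ _)))
      _ (Finset.mem_eraseNone.1 (hsub (by simp : b ∈ _))) (by simpa using hab))).1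
    rw [hpair] at h
    exact h subset_rfl
  · refine hflag _ ?_ hvert hedge
    obtain ⟨_ | v, hv'⟩ := hσ
    · exact absurd hv' hn
    · exact ⟨v, by simpa using hv'⟩
  · -- Being joined to the new vertex means spanning a face together with `e`.
    have hcone : ∀ u ∈ σ.eraseNone, insert u e ∈ L := by
      intro u hu
      have h := ((mem_subdiv_iff hL he _).1
        (hp _ hn _ (Finset.mem_eraseNone.1 hu) (by simp))).2.2 (by simp)
      have h2 {_ : DecidableEq (Option V)} :
          ({none, some u} : Finset (Option V)).eraseNone = {u} := by ext x; simp
      rwa [h2, ← Finset.insert_eq] at h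
    have hne : (e : Finset V).Nonempty := hL.1 e he.1
    refine hflag _ (hne.mono Finset.subset_union_right) ?_ ?_
    · intro v hv'
      rcases Finset.mem_union.1 hv' with h | h
      · exact hvert v h
      · exact hL.2 e he.1 _ (by simpa using h) (by simp)
    · intro u hu v hv' huv
      rcases Finset.mem_union.1 hu with h | h <;> rcases Finset.mem_union.1 hv' with h' | h'
      · exact hedge u h v h' huv
      · exact hL.2 _ (hcone u h) _ (by simp [Finset.insert_subset_iff, h']) (by simp)
      · exact hL.2 _ (hcone v h') _ (by simp [Finset.insert_subset_iff, h]) (by simp)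
      · exact hL.2 _ he.1 _ (by simp [Finset.insert_subset_iff, h, h']) (by simp)

/-- the edge subdivision of a flag simplicial complex along an edge
is again a flag simplicial complex. -/
theorem subdiv_flag
    {V : Type} [Fintype V] (L : SCplx V) (e : Finset V)
    (hL : IsComplex L) (hflag : FlagCplx L) (he : IsEdge L e) :
    IsComplex (subdiv L e) ∧ FlagCplx (subdiv L e) := by
  exact ⟨isComplex_subdiv hL he, flagCplx_subdiv hL hflag he⟩
end
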